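/- Let q = 2^k, ω = exp(2πi/q), and let F_{2^m} be the finite field with 2^m elements with absolute trace Tr : F_{2^m} → F_2. For j = 0,1,…,k−1 let G_j : F_{2^m} → F_2 be balanced Boolean functions (each value 0 and 1 is attained 2^{m−1} times) with G_j(0) = 0 and Σ_{t ∈ F_{2^m}} ω^{Σ_{j=0}^{k−1} 2^j G_j(t)} = 0. If G_j(u) = G_j(1/u) for all u ∈ F_{2^m} (with the convention 1/0 = 0), then the function f : F_{2^m} × F_{2^m} → Z_{2^k} given by f(x,y) = Σ_{j=0}^{k−1} 2^j G_j(x/y) (with x/0 = 0) satisfies H_f(a,b) = 2^m · ω^{f(a,b)} for all a,b ∈ F_{2^m}, i.e., f is a self-dual gbent function in 2m variables. -/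

import Mathlib

/-- ω = exp(2πi/q), a primitive q-th root of unity. -/
noncomputable def omega (q : ℕ) : ℂ := Complex.exp (2 * Real.pi * Complex.I / q)

/-!
Cover the plane by the lines through the origin. The function takes the constant value `g t` on
`x = t y`, and the value `g 0` on `y = 0` because `x / 0 = 0`. The origin lies on every line, but
`∑ t, g t = 0` cancels this overcounting. By orthogonality of characters only the line on which
`a x + b y` vanishes survives, so the Walsh transform at `(a, b)` is `|K| * g (-(b / a))`. In
characteristic two and for `g` invariant under inversion, this is `|K| * g (a / b)`.
-/

section WalshTransform

variable {K R : Type*} [Field K] [Fintype K] [CommRing R] {ψ : AddChar K R}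

/-- The Walsh transform of a function `h` on the plane `K²` with respect to an additive character
`ψ`. For `K` of characteristic two, `h = ω ^ f` and `ψ z = (-1) ^ Tr z`, this is the transform `H_f`
of the generalized Boolean function `f`. -/
def walshTransform (ψ : AddChar K R) (h : K → K → R) (a b : K) : R :=
  ∑ x, ∑ y, h x y * ψ (a * x + b * y)

lemma sum_div_mul_addChar_of_ne_zero (g : K → R) (a b : K) {y : K} (hy : y ≠ 0) :
    ∑ x, g (x / y) * ψ (a * x + b * y) = ∑ t, g t * ψ (y * (a * t + b)) := by
  refine Fintype.sum_equiv (Equiv.divRight₀ y hy) _ _ fun x => ?_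
  have on_line : y * (a * (x / y) + b) = a * x + b * y := by field_simp
  rw [Equiv.divRight₀_apply, on_line]

-- The correction at `y = 0` comes from the convention `x / 0 = 0`.
lemma sum_div_mul_addChar [DecidableEq K] {g : K → R} (hg : ∑ t, g t = 0) (a b y : K) :
    ∑ x, g (x / y) * ψ (a * x + b * y)
      = ∑ t, g t * ψ (y * (a * t + b)) + if y = 0 then g 0 * ∑ x, ψ (x * a) else 0 := by
  split_ifs with hy
  · simp [hy, hg, Finset.mul_sum, mul_comm a]
  · rw [add_zero, sum_div_mul_addChar_of_ne_zero g a b hy]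

lemma sum_ite_mul_add_eq_zero_add_ite [DecidableEq K] {M : Type*} [AddCommMonoid M] {g : K → M}
    (hg : ∑ t, g t = 0) (a b : K) :
    (∑ t, if a * t + b = 0 then g t else 0) + (if a = 0 then g 0 else 0) = g (-(b / a)) := by
  rcases eq_or_ne a 0 with rfl | ha
  · by_cases hb : b = 0 <;> simp [hb, hg]
  · have root : ∀ t, a * t + b = 0 ↔ t = -(b / a) := fun t => by
      rw [← neg_div, eq_div_iff ha, mul_comm, eq_neg_iff_add_eq_zero]
    simp [ha, root]

variable [IsDomain R]

lemma sum_sum_mul_addChar [DecidableEq K] (hψ : ψ.IsPrimitive) (g : K → R) (a b : K) :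
    ∑ y, ∑ t, g t * ψ (y * (a * t + b))
      = Fintype.card K * ∑ t, if a * t + b = 0 then g t else 0 := by
  rw [Finset.sum_comm, Finset.mul_sum]
  refine Finset.sum_congr rfl fun t _ => ?_
  rw [← Finset.mul_sum, AddChar.sum_mulShift _ hψ]
  split_ifs <;> simp [mul_comm]

theorem walshTransform_div (hψ : ψ.IsPrimitive) {g : K → R} (hg : ∑ t, g t = 0) (a b : K) :
    walshTransform ψ (fun x y => g (x / y)) a b = Fintype.card K * g (-(b / a)) := by
  classical
  calc walshTransform ψ (fun x y => g (x / y)) a b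
      = ∑ y, ∑ x, g (x / y) * ψ (a * x + b * y) := Finset.sum_comm
    _ = (∑ y, ∑ t, g t * ψ (y * (a * t + b))) + g 0 * ∑ x, ψ (x * a) := by
      simp only [sum_div_mul_addChar hg, Finset.sum_add_distrib, Finset.sum_ite_eq',
        Finset.mem_univ, if_true]
    _ = Fintype.card K *
          ((∑ t, if a * t + b = 0 then g t else 0) + if a = 0 then g 0 else 0) := by
      rw [sum_sum_mul_addChar hψ, AddChar.sum_mulShift _ hψ]
      split_ifs <;> push_cast <;> ring
    _ = Fintype.card K * g (-(b / a)) := by rw [sum_ite_mul_add_eq_zero_add_ite hg]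

end WalshTransform

section TraceCharacter

variable (K : Type*) [Field K] [Algebra (ZMod 2) K]

/-- The additive character `z ↦ (-1) ^ Tr z` of an extension `K` of `𝔽₂`, where `Tr` is the absolute
trace; it is the character in the Walsh transform of a generalized Boolean function. -/
noncomputable def traceChar : AddChar K ℂ :=
  (AddChar.zmodChar 2 (ζ := (-1 : ℂ)) (by norm_num)).compAddMonoidHom
    (Algebra.trace (ZMod 2) K).toAddMonoidHom

lemma traceChar_apply (z : K) :
    traceChar K z = (-1 : ℂ) ^ (Algebra.trace (ZMod 2) K z).val :=
  AddChar.zmodChar_apply (by norm_num) _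

lemma traceChar_isPrimitive [Finite K] : (traceChar K).IsPrimitive := by
  refine AddChar.IsPrimitive.of_ne_one fun h => ?_
  obtain ⟨z, hz⟩ := Algebra.trace_surjective (ZMod 2) K 1
  have h_neg_one : (-1 : ℂ) = 1 := by
    simpa [traceChar_apply, hz, ZMod.val_one] using DFunLike.congr_fun h z
  norm_num at h_neg_one

end TraceCharacter

lemma omega_pow_val_natCast (q : ℕ) [NeZero q] (n : ℕ) :
    omega q ^ (n : ZMod q).val = omega q ^ n := by
  have omega_pow_self : omega q ^ q = 1 :=
    (Complex.isPrimitiveRoot_exp q (NeZero.ne q)).pow_eq_one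
  rw [ZMod.val_natCast, ← pow_eq_pow_mod n omega_pow_self]

theorem dillon_selfDual_general {q : ℕ} {K : Type*} [Field K] [Fintype K] [Algebra (ZMod 2) K]
    {V : K → ZMod q} (hsum : ∑ t, omega q ^ (V t).val = 0) (hinv : ∀ u, V u = V u⁻¹) (a b : K) :
    walshTransform (traceChar K) (fun x y => omega q ^ (V (x / y)).val) a b
      = Fintype.card K * omega q ^ (V (a / b)).val := by
  have : CharP K 2 := charP_of_injective_algebraMap (algebraMap (ZMod 2) K).injective 2
  rw [walshTransform_div (g := fun t => omega q ^ (V t).val) (traceChar_isPrimitive K) hsum,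
    CharTwo.neg_eq, hinv (b / a), inv_div]

/-- Dillon-type (PS_ap) self-dual gbent functions: if the balanced functions
`G_j` satisfy `G_j(u) = G_j(1/u)`, then `f(x,y) = Σ 2^j G_j(x/y)` is a self-dual
gbent function in `2m` variables. -/
theorem dillon_selfDual (k m : ℕ) (hk : 1 ≤ k) (hm : 1 ≤ m)
    (F : Type) [Field F] [Fintype F] [DecidableEq F] [Algebra (ZMod 2) F]
    (hcard : Fintype.card F = 2 ^ m)
    (G : ℕ → F → ZMod 2)
    (hbal : ∀ j < k, ∀ v : ZMod 2,
      (Finset.univ.filter (fun t : F => G j t = v)).card = 2 ^ (m - 1))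
    (hzero : ∀ j < k, G j 0 = 0)
    (hsum : ∑ t : F, omega (2 ^ k) ^ (∑ j ∈ Finset.range k, 2 ^ j * (G j t).val) = 0)
    (hinv : ∀ j < k, ∀ u : F, G j u = G j u⁻¹)
    (f : F × F → ZMod (2 ^ k))
    (hf : ∀ x y : F, f (x, y) = ∑ j ∈ Finset.range k,
      (2 ^ j : ZMod (2 ^ k)) * ((G j (x * y⁻¹)).val : ZMod (2 ^ k))) :
    ∀ a b : F,
      (∑ x : F, ∑ y : F, omega (2 ^ k) ^ (f (x, y)).val *
          (-1 : ℂ) ^ ((Algebra.trace (ZMod 2) F) (a * x) +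
            (Algebra.trace (ZMod 2) F) (b * y)).val)
        = (2 ^ m : ℂ) * omega (2 ^ k) ^ (f (a, b)).val := by
  intro a b
  have selfDual := dillon_selfDual_general
    (V := fun t => ((∑ j ∈ Finset.range k, 2 ^ j * (G j t).val : ℕ) : ZMod (2 ^ k)))
    (by simpa only [omega_pow_val_natCast] using hsum)
    (fun u => congrArg Nat.cast <| Finset.sum_congr rfl fun j hj => by
      rw [hinv j (Finset.mem_range.1 hj) u]) a b
  simpa only [walshTransform, traceChar_apply, map_add, div_eq_mul_inv, hf, hcard, Nat.cast_sum,
    Nat.cast_mul, Nat.cast_pow, Nat.cast_ofNat] using selfDual
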